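/- Let Ω ⊆ ℝⁿ be an open domain, let M, P, Q satisfy conditions (M) and (Y), and let μ satisfy condition (μ). Assume the Hardy-type inequality (H): there are constants K, A > 0 such that ∫_Ω P(|∇φ|·|u|) dμ ≤ K·∫_Ω P(A·|∇u|) dμ for every u ∈ C₀^∞(Ω). Then there exist constants L, B > 0 such that for every θ > 0 and every u ∈ C₀^∞(Ω): ∫_Ω M(|∇u|) dμ ≤ L·∫_Ω P(θ·|∇⁽²⁾u|) dμ + ∫_Ω Q((B/θ)·|u|) dμ. -/

import Mathlib

/-!
The inequality comes from an integration by parts. Put `N(t) = M(√t) / t`, so that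
`M(|∇u|) = N(|∇u|²) ∇u · ∇u`. With respect to `μ = e^{-φ} dx`, moving one gradient off `u` gives

  `∫ N |∇u|² dμ = - ∫ u div(N ∇u) dμ + ∫ u N ∇u · ∇φ dμ`,

where convexity and Δ₂ give `|N'(t)| t ≤ (c + 1) N(t)`, hence `|div(N ∇u)| ≤ C N |∇⁽²⁾u|`
(`abs_pd_field_le`). Both integrands on the right have the form `(M(λ)/λ²) v w`, with
`v = θ |∇⁽²⁾u|` or `v = s |∇φ| |∇u|` and `w` a multiple of `|u| / θ`; the Young inequality, with
an extra factor `1/4`, produces `½ M(|∇u|)`, which is absorbed on the left, the modulars of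
`|∇⁽²⁾u|` and of `u`, and `∫ P(s |∇φ| |∇u|) dμ`. Since `|∇u| ≤ (n + 1) |∂ᵢu|` for some `i` unless
`∇u = 0`, this last integral is at most the sum over `i` of the modulars of
`|∇φ| |(θ / A) ∂ᵢu|`. The functions `(θ / A) ∂ᵢu` are test functions, so the Hardy inequality
bounds each of them by `K ∫ P(θ |∇⁽²⁾u|) dμ` (`hardy_pd`).

Two regularity issues arise. The field `N(|∇u|²) ∇u` need not be differentiable where `∇u = 0`, so
`|∇u|²` is replaced by `|∇u|² + ε`; the Young inequality is applied at fixed `ε`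
(`regularized_inequality`), and only the modulars of `M`, which converge by domination, are then
passed to the limit `ε → 0` (`limit_step`). The weight `e^{-φ}` is only locally Lipschitz, but its
product with a compactly supported `C¹` function is Lipschitz, and integration by parts for
Lipschitz functions applies (`integral_fderiv_sub_eq_zero`).
-/

open MeasureTheory Filter Set

noncomputable section

/-- `E n` is the Euclidean space `ℝⁿ`. -/
abbrev E (n : ℕ) := EuclideanSpace ℝ (Fin n)

/-- An `N`-function: a continuous convex function `M : [0,∞) → [0,∞)` with `M(0) = 0`,
`lim_{λ→0} M(λ)/λ = 0` and `lim_{λ→∞} λ/M(λ) = 0`. -/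
def IsNFunction (M : ℝ → ℝ) : Prop :=
  ContinuousOn M (Ici 0) ∧ ConvexOn ℝ (Ici 0) M ∧ M 0 = 0 ∧
  (∀ x ≥ (0:ℝ), 0 ≤ M x) ∧
  Tendsto (fun l => M l / l) (nhdsWithin 0 (Ioi 0)) (nhds 0) ∧
  Tendsto (fun l => l / M l) atTop (nhds 0)

/-- The Δ₂-condition. -/
def Delta2 (M : ℝ → ℝ) : Prop := ∃ c > 0, ∀ l > (0:ℝ), M (2 * l) ≤ c * M l

/-- Condition (M): `M` is an `N`-function of class `C¹` on `(0,∞)` satisfying the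
Δ₂-condition and such that `M'(λ)/λ` is bounded near zero. -/
def CondM (M : ℝ → ℝ) : Prop :=
  IsNFunction M ∧ ContDiffOn ℝ 1 M (Ioi 0) ∧ Delta2 M ∧
  ∃ ε > (0:ℝ), ∃ C : ℝ, ∀ l ∈ Ioo (0:ℝ) ε, deriv M l / l ≤ C

/-- Condition (Y): `P, Q` are nonnegative nondecreasing measurable functions vanishing at `0`
such that the Young-type inequality `(M(u)/u²)·v·w ≤ M(u) + P(v) + Q(w)` holds. -/
def CondY (M P Q : ℝ → ℝ) : Prop :=
  Measurable P ∧ Measurable Q ∧ (∀ x ≥ (0:ℝ), 0 ≤ P x) ∧ (∀ x ≥ (0:ℝ), 0 ≤ Q x) ∧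
  MonotoneOn P (Ici 0) ∧ MonotoneOn Q (Ici 0) ∧ P 0 = 0 ∧ Q 0 = 0 ∧
  ∀ u > (0:ℝ), ∀ v > (0:ℝ), ∀ w > (0:ℝ), M u / u ^ 2 * v * w ≤ M u + P v + Q w

/-- `φ` is locally Lipschitz on `Ω`. -/
def LocLipschitzOn {α : Type*} [MetricSpace α] (Ω : Set α) (φ : α → ℝ) : Prop :=
  ∀ x ∈ Ω, ∃ s ∈ nhdsWithin x Ω, ∃ K : NNReal, LipschitzOnWith K φ s

/-- The measure `μ(dx) = e^{-φ(x)} dx` on the domain `Ω`. -/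
def measOf {n : ℕ} (Ω : Set (E n)) (φ : E n → ℝ) : Measure (E n) :=
  (volume.restrict Ω).withDensity fun x => ENNReal.ofReal (Real.exp (-φ x))

/-- `u ∈ C₀^∞(Ω)`: smooth and compactly supported inside `Ω`. -/
def TestFun {n : ℕ} (Ω : Set (E n)) (u : E n → ℝ) : Prop :=
  ContDiff ℝ (⊤ : ℕ∞) u ∧ HasCompactSupport u ∧ tsupport u ⊆ Ω

/-- The Hilbert–Schmidt norm of the Hessian of `u` at `x`. -/
def hessNormHS {n : ℕ} (u : E n → ℝ) (x : E n) : ℝ :=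
  Real.sqrt (∑ i : Fin n, ∑ j : Fin n,
    (iteratedFDeriv ℝ 2 u x ![EuclideanSpace.single i (1:ℝ), EuclideanSpace.single j (1:ℝ)]) ^ 2)

/-- The Luxemburg norm `‖f‖_{L^R(μ)} = inf {K > 0 : ∫ R(|f|/K) dμ ≤ 1}`. -/
def luxNorm {α : Type*} [MeasurableSpace α] (R : ℝ → ℝ) (μ : Measure α) (f : α → ℝ) : ℝ :=
  sInf {K : ℝ | 0 < K ∧ ∫ x, R (|f x| / K) ∂μ ≤ 1}

/-! ### Integration by parts against a locally Lipschitz weight -/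

lemma lipschitz_of_locallyLipschitz {n : ℕ} {w : E n → ℝ} (hw : LocallyLipschitz w)
    (hc : HasCompactSupport w) : ∃ C, LipschitzWith C w := by
  have hT : IsCompact (Metric.cthickening 1 (tsupport w)) := IsCompact.cthickening hc
  obtain ⟨C, hC⟩ := LocallyLipschitzOn.exists_lipschitzOnWith_of_compact hT
    (LocallyLipschitz.locallyLipschitzOn hw)
  obtain ⟨B, hB⟩ := hw.continuous.bounded_above_of_compact_support hc
  have hB0 : 0 ≤ B := (norm_nonneg _).trans (hB 0)
  have key : ∀ x ∈ tsupport w, ∀ y, dist (w x) (w y) ≤ (C + 2 * B) * dist x y := by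
    intro x hx y
    by_cases hy : y ∈ Metric.cthickening 1 (tsupport w)
    · have := hC.dist_le_mul x (Metric.self_subset_cthickening _ hx) y hy
      nlinarith [dist_nonneg (x := x) (y := y)]
    · have h1 : 1 < dist y x := by
        by_contra! h
        exact hy (Metric.mem_cthickening_of_dist_le _ _ _ _ hx h)
      have h2 : dist (w x) (w y) ≤ 2 * B := by
        have := dist_le_norm_add_norm (w x) (w y)
        linarith [hB x, hB y]
      rw [dist_comm] at h1
      have := C.2
      have h3 : 0 ≤ (C:ℝ) * dist x y := by positivity
      nlinarith
  refine ⟨_, LipschitzWith.of_dist_le' (K := C + 2 * B) fun x y => ?_⟩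
  by_cases hx : x ∈ tsupport w
  · exact key x hx y
  by_cases hy : y ∈ tsupport w
  · rw [dist_comm, dist_comm x]; exact key y hy x
  · rw [image_eq_zero_of_notMem_tsupport hx, image_eq_zero_of_notMem_tsupport hy, dist_self]
    positivity

lemma LocLipschitzOn.continuousOn {n : ℕ} {Ω : Set (E n)} {φ : E n → ℝ}
    (hφ : LocLipschitzOn Ω φ) : ContinuousOn φ Ω := by
  have h : LocallyLipschitzOn Ω φ := fun x hx => by
    obtain ⟨s, hs, K, h⟩ := hφ x hx
    exact ⟨K, s, hs, h⟩
  exact h.continuousOn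

lemma locallyLipschitz_mul_exp {n : ℕ} {Ω : Set (E n)} (hΩ : IsOpen Ω) {φ k : E n → ℝ}
    (hφ : LocLipschitzOn Ω φ) (hk : ContDiff ℝ 1 k) (hs : tsupport k ⊆ Ω) :
    LocallyLipschitz fun x => k x * Real.exp (-φ x) := by
  intro x
  by_cases hx : x ∈ Ω
  · obtain ⟨t, ht, K, hK⟩ := hφ x hx
    rw [hΩ.nhdsWithin_eq hx] at ht
    have hW : ContDiff ℝ 1 fun p : E n × ℝ => k p.1 * Real.exp (-p.2) := by fun_prop
    obtain ⟨C, s, hs', hC⟩ := hW.locallyLipschitz (x, φ x)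
    have hcont : ContinuousAt (fun y => (y, φ y)) x :=
      continuousAt_id.prodMk (hφ.continuousOn.continuousAt (hΩ.mem_nhds hx))
    have hg : LipschitzOnWith (max 1 K) (fun y => (y, φ y)) t :=
      LipschitzWith.id.lipschitzOnWith.prodMk hK
    exact ⟨C * max 1 K, t ∩ (fun y => (y, φ y)) ⁻¹' s, inter_mem ht (hcont hs'),
      hC.comp (hg.mono inter_subset_left) fun y hy => hy.2⟩
  · have hx' : x ∉ tsupport k := fun h => hx (hs h)
    refine ⟨0, (tsupport k)ᶜ, (isClosed_tsupport k).isOpen_compl.mem_nhds hx', ?_⟩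
    intro y hy z hz
    simp [image_eq_zero_of_notMem_tsupport hy, image_eq_zero_of_notMem_tsupport hz]

/-- Integration by parts: the weighted derivative `∂ᵥk - k ∂ᵥφ = e^φ ∂ᵥ(k e^{-φ})` of a compactly
supported `C¹` function integrates to zero against `e^{-φ} dx`. -/
lemma integral_fderiv_sub_eq_zero {n : ℕ} {Ω : Set (E n)} (hΩ : IsOpen Ω) {φ k : E n → ℝ}
    (hφ : LocLipschitzOn Ω φ) {φ' : E n → E n}
    (hφ' : ∀ᵐ x ∂(volume.restrict Ω), HasGradientAt φ (φ' x) x)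
    (hk : ContDiff ℝ 1 k) (hc : HasCompactSupport k) (hs : tsupport k ⊆ Ω) (v : E n) :
    ∫ x, (fderiv ℝ k x v - k x * inner ℝ (φ' x) v) ∂(measOf Ω φ) = 0 := by
  set w : E n → ℝ := fun x => k x * Real.exp (-φ x) with hw
  have hsub : tsupport w ⊆ tsupport k := tsupport_mul_subset_left
  have hcw : HasCompactSupport w := hc.mul_right
  obtain ⟨C, hC⟩ := lipschitz_of_locallyLipschitz (locallyLipschitz_mul_exp hΩ hφ hk hs) hcw
  have h0 : ∫ x, lineDeriv ℝ w x v = 0 := by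
    -- tested against the constant function `1`, whose derivative vanishes
    have := LipschitzWith.integral_lineDeriv_mul_eq (μ := (volume : Measure (E n)))
      (LipschitzWith.const (1:ℝ)) hC hcw (-v)
    simp only [neg_neg, mul_one] at this
    rw [← this]
    simp [lineDeriv]
  have hmeas : AEMeasurable (fun x => ENNReal.ofReal (Real.exp (-φ x))) (volume.restrict Ω) :=
    ENNReal.measurable_ofReal.comp_aemeasurable
      ((Real.continuous_exp.comp_continuousOn hφ.continuousOn.neg).aemeasurable hΩ.measurableSet)
  rw [← setIntegral_eq_integral_of_forall_compl_eq_zero (s := Ω)] at h0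
  · rw [measOf, integral_withDensity_eq_integral_toReal_smul₀ hmeas (by simp), ← h0]
    refine integral_congr_ae ?_
    filter_upwards [hφ'] with x hx
    have h1 := ((hk.differentiable one_ne_zero) x).hasFDerivAt.mul hx.hasFDerivAt.neg.exp
    change HasFDerivAt w _ x at h1
    rw [h1.differentiableAt.lineDeriv_eq_fderiv, h1.fderiv,
      ENNReal.toReal_ofReal (Real.exp_pos _).le]
    simp
    ring
  · intro x hx
    have hx' : x ∉ tsupport w := fun h => hx (hs (hsub h))
    have h1 : w =ᶠ[nhds x] fun _ => 0 := notMem_tsupport_iff_eventuallyEq.1 hx'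
    rw [h1.lineDeriv_eq]
    simp [lineDeriv]

lemma exists_gradient_bound {n : ℕ} {Ω S : Set (E n)} (hΩ : IsOpen Ω) {φ : E n → ℝ}
    (hφ : LocLipschitzOn Ω φ) (hS : IsCompact S) (hSΩ : S ⊆ Ω) :
    ∃ C : ℝ, 0 ≤ C ∧ ∀ x ∈ S, ∀ g, HasGradientAt φ g x → ‖g‖ ≤ C := by
  obtain ⟨δ, hδ, hT⟩ := hS.exists_cthickening_subset_open hΩ hSΩ
  have h : LocallyLipschitzOn Ω φ := fun x hx => by
    obtain ⟨s, hs, K, h⟩ := hφ x hx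
    exact ⟨K, s, hs, h⟩
  obtain ⟨C, hC⟩ := LocallyLipschitzOn.exists_lipschitzOnWith_of_compact
    (IsCompact.cthickening hS (r := δ)) (h.mono hT)
  refine ⟨C, C.2, fun x hx g hg => ?_⟩
  have hn : Metric.cthickening δ S ∈ nhds x :=
    mem_of_superset (Metric.isOpen_thickening.mem_nhds (Metric.self_subset_thickening hδ S hx))
      (Metric.thickening_subset_cthickening δ S)
  have := hg.hasFDerivAt.le_of_lipschitzOn hn hC
  simpa using this

lemma isFiniteMeasure_restrict {n : ℕ} {Ω S : Set (E n)} {φ : E n → ℝ}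
    (hφ : LocLipschitzOn Ω φ) (hS : IsCompact S) (hSΩ : S ⊆ Ω) :
    IsFiniteMeasure ((measOf Ω φ).restrict S) := by
  obtain ⟨C, hC⟩ := hS.exists_bound_of_continuousOn
    (Real.continuous_exp.comp_continuousOn (hφ.continuousOn.mono hSΩ).neg)
  refine ⟨?_⟩
  rw [Measure.restrict_apply_univ, measOf, withDensity_apply _ hS.measurableSet,
    Measure.restrict_restrict hS.measurableSet, inter_eq_left.2 hSΩ]
  calc ∫⁻ x in S, ENNReal.ofReal (Real.exp (-φ x))
      ≤ ∫⁻ x in S, ENNReal.ofReal C := by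
        refine setLIntegral_mono measurable_const fun x hx => ENNReal.ofReal_le_ofReal ?_
        exact (le_abs_self _).trans (hC x hx)
    _ < ⊤ := by
        rw [setLIntegral_const]
        exact ENNReal.mul_lt_top ENNReal.ofReal_lt_top hS.measure_lt_top

/-! ### Growth of the N-function -/

lemma IsNFunction.monotoneOn {M : ℝ → ℝ} (hM : IsNFunction M) : MonotoneOn M (Ici 0) := by
  obtain ⟨-, hconv, h0, hpos, -, -⟩ := hM
  intro x hx y hy hxy
  rcases eq_or_lt_of_le (show (0:ℝ) ≤ y from hy) with h | h
  · have : x = y := le_antisymm hxy (h ▸ hx)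
    rw [this]
  have hx0 : (0:ℝ) ≤ x := hx
  have h1 : x / y ≤ 1 := div_le_one_of_le₀ hxy h.le
  have h2 : 0 ≤ x / y := by positivity
  have := hconv.2 hy (self_mem_Ici) h2 (sub_nonneg.2 h1) (by ring)
  simp only [smul_eq_mul, mul_zero, add_zero, h0, div_mul_cancel₀ _ h.ne'] at this
  exact this.trans (mul_le_of_le_one_left (hpos y hy) h1)

/-- The function `N(t) = M(√t) / t`, so that `N(λ²) = M(λ) / λ²`. Using the square of the length
of a vector as its argument keeps everything differentiable. -/
def quotM (M : ℝ → ℝ) (t : ℝ) : ℝ := M (Real.sqrt t) / t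

lemma quotM_contDiffOn {M : ℝ → ℝ} (hM : ContDiffOn ℝ 1 M (Ioi 0)) :
    ContDiffOn ℝ 1 (quotM M) (Ioi 0) := by
  have h1 : ContDiffOn ℝ 1 Real.sqrt (Ioi 0) := fun t ht =>
    (Real.contDiffAt_sqrt (ne_of_gt ht)).contDiffWithinAt
  have h2 : ContDiffOn ℝ 1 (fun t => M (Real.sqrt t)) (Ioi 0) :=
    hM.comp h1 fun t ht => Real.sqrt_pos.2 ht
  exact h2.div contDiffOn_id fun t ht => ne_of_gt ht

/-- Convexity bounds `λ M'(λ)` below by `M(λ)` and above by `M(2λ) - M(λ)`, hence, under the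
Δ₂-condition, the logarithmic derivative of `N(t) = M(√t) / t` is `O(1/t)`. -/
lemma abs_deriv_quotM_mul_le {M : ℝ → ℝ} (hM : IsNFunction M) (hC : ContDiffOn ℝ 1 M (Ioi 0))
    {c : ℝ} (hΔ : ∀ l > (0:ℝ), M (2 * l) ≤ c * M l) {t : ℝ} (ht : 0 < t) :
    |deriv (quotM M) t| * t ≤ (c + 1) * quotM M t := by
  obtain ⟨-, hconv, h0, hpos, -, -⟩ := hM
  set r := Real.sqrt t with hr
  have hr0 : 0 < r := Real.sqrt_pos.2 ht
  have hrt : r ^ 2 = t := Real.sq_sqrt ht.le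
  have hd : HasDerivAt M (deriv M r) r :=
    ((hC.differentiableOn one_ne_zero).differentiableAt (Ioi_mem_nhds hr0)).hasDerivAt
  have h1 : deriv M r * r ≤ c * M r - M r := by
    have := hconv.le_slope_of_hasDerivAt (x := r) (y := 2 * r) hr0.le
      (by simp [hr0.le]) (by linarith) hd
    rw [slope_def_field, show 2 * r - r = r by ring, le_div_iff₀ hr0] at this
    linarith [hΔ r hr0]
  have h2 : M r ≤ deriv M r * r := by
    have := hconv.slope_le_of_hasDerivAt (x := 0) (y := r) self_mem_Ici hr0.le hr0 hd
    rw [slope_def_field, h0, sub_zero, sub_zero, div_le_iff₀ hr0] at this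
    linarith
  have hN : HasDerivAt (quotM M) ((deriv M r * (1 / (2 * r)) * t - M r * 1) / t ^ 2) t :=
    (HasDerivAt.comp t hd (Real.hasDerivAt_sqrt ht.ne')).div (hasDerivAt_id t) ht.ne'
  have hMr := hpos r hr0.le
  have e : |deriv (quotM M) t| * t = |deriv M r * r / 2 - M r| / t := by
    have : deriv M r * (1 / (2 * r)) * t = deriv M r * r / 2 := by
      rw [← hrt]; field_simp
    rw [hN.deriv, this, mul_one, abs_div, abs_of_pos (pow_pos ht 2)]
    field_simp
  rw [e, quotM, ← mul_div_assoc]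
  refine div_le_div_of_nonneg_right ?_ ht.le
  rw [abs_le]
  constructor <;> nlinarith

/-! ### First and second partial derivatives -/

/-- The partial derivative `∂ᵢu`. -/
def pd {n : ℕ} (u : E n → ℝ) (i : Fin n) (x : E n) : ℝ :=
  fderiv ℝ u x (EuclideanSpace.single i (1:ℝ))

section
variable {n : ℕ} {u : E n → ℝ}

lemma contDiff_pd (hu : ContDiff ℝ (⊤ : ℕ∞) u) (i : Fin n) : ContDiff ℝ (⊤ : ℕ∞) (pd u i) :=
  (hu.fderiv_right (m := (⊤ : ℕ∞)) (by norm_cast)).clm_apply contDiff_const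

lemma tsupport_pd_subset (i : Fin n) : tsupport (pd u i) ⊆ tsupport u :=
  tsupport_fderiv_apply_subset ℝ _

lemma gradient_apply (u : E n → ℝ) (x : E n) (i : Fin n) : (gradient u x) i = pd u i x := by
  have h : inner ℝ (gradient u x) (EuclideanSpace.single i (1:ℝ)) = pd u i x := by
    simp [gradient, pd]
  rw [← h, EuclideanSpace.inner_single_right]
  simp

lemma norm_gradient_sq (u : E n → ℝ) (x : E n) :
    ‖gradient u x‖ ^ 2 = ∑ i, pd u i x ^ 2 := by
  simp_rw [EuclideanSpace.norm_sq_eq, gradient_apply, Real.norm_eq_abs, sq_abs]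

lemma abs_pd_le (u : E n → ℝ) (i : Fin n) (x : E n) : |pd u i x| ≤ ‖gradient u x‖ := by
  refine abs_le_of_sq_le_sq ?_ (norm_nonneg _)
  rw [norm_gradient_sq]
  exact Finset.single_le_sum (f := fun j => pd u j x ^ 2) (fun j _ => sq_nonneg _)
    (Finset.mem_univ i)

lemma continuous_norm_gradient (hu : ContDiff ℝ (⊤ : ℕ∞) u) :
    Continuous fun x => ‖gradient u x‖ := by
  have : ∀ x, ‖gradient u x‖ = ‖fderiv ℝ u x‖ := fun x => by simp [gradient]
  simp only [this]
  exact (hu.continuous_fderiv (by simp)).norm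

lemma hessNormHS_eq (hu : ContDiff ℝ (⊤ : ℕ∞) u) (x : E n) :
    hessNormHS u x = Real.sqrt (∑ i, ∑ j, pd (pd u j) i x ^ 2) := by
  unfold hessNormHS
  congr 1
  refine Finset.sum_congr rfl fun i _ => Finset.sum_congr rfl fun j _ => ?_
  rw [iteratedFDeriv_two_apply]
  have hd : DifferentiableAt ℝ (fderiv ℝ u) x :=
    (hu.fderiv_right (m := (⊤ : ℕ∞)) (by norm_cast)).differentiable (by simp) x
  have : pd (pd u j) i x = fderiv ℝ (fderiv ℝ u) x (EuclideanSpace.single i (1:ℝ))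
      (EuclideanSpace.single j (1:ℝ)) := by
    change fderiv ℝ (fun y => fderiv ℝ u y (EuclideanSpace.single j (1:ℝ))) x _ = _
    rw [fderiv_clm_apply hd (differentiableAt_const _)]
    simp
  rw [this]
  simp

lemma continuous_hessNormHS (hu : ContDiff ℝ (⊤ : ℕ∞) u) : Continuous (hessNormHS u) := by
  have : hessNormHS u = fun x => Real.sqrt (∑ i, ∑ j, pd (pd u j) i x ^ 2) :=
    funext (hessNormHS_eq hu)
  rw [this]
  have h : ∀ i j, Continuous (pd (pd u j) i) := fun i j =>
    (contDiff_pd (contDiff_pd hu j) i).continuous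
  fun_prop

lemma norm_gradient_pd_le (hu : ContDiff ℝ (⊤ : ℕ∞) u) (i : Fin n) (x : E n) :
    ‖gradient (pd u i) x‖ ≤ hessNormHS u x := by
  rw [hessNormHS_eq hu]
  apply Real.le_sqrt_of_sq_le
  rw [norm_gradient_sq]
  exact Finset.sum_le_sum fun j _ =>
    Finset.single_le_sum (f := fun k => pd (pd u k) j x ^ 2) (fun k _ => sq_nonneg _)
      (Finset.mem_univ i)

lemma hessNormHS_nonneg (u : E n → ℝ) (x : E n) : 0 ≤ hessNormHS u x := Real.sqrt_nonneg _

lemma hessNormHS_eq_zero (hu : ContDiff ℝ (⊤ : ℕ∞) u) {x : E n} (hx : x ∉ tsupport u) :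
    hessNormHS u x = 0 := by
  rw [hessNormHS_eq hu, Real.sqrt_eq_zero']
  refine (Finset.sum_eq_zero fun i _ => Finset.sum_eq_zero fun j _ => ?_).le
  rw [image_eq_zero_of_notMem_tsupport fun h => hx (tsupport_pd_subset j (tsupport_pd_subset i h))]
  simp

lemma gradient_eq_zero {x : E n} (hx : x ∉ tsupport u) : gradient u x = 0 := by
  have : fderiv ℝ u x = 0 :=
    image_eq_zero_of_notMem_tsupport fun h => hx (tsupport_fderiv_subset ℝ h)
  simp [gradient, this]

/-- Some coordinate carries at least the fraction `1 / (n + 1)` of the length of the gradient. -/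
lemma exists_norm_gradient_le (u : E n → ℝ) (x : E n) :
    gradient u x = 0 ∨ ∃ i, ‖gradient u x‖ ≤ (n + 1) * |pd u i x| := by
  by_contra! h
  obtain ⟨h0, h⟩ := h
  have hpos : 0 < ‖gradient u x‖ := norm_pos_iff.2 h0
  have h1 : ∀ i, ((n:ℝ) + 1) ^ 2 * pd u i x ^ 2 ≤ ‖gradient u x‖ ^ 2 := fun i => by
    rw [← sq_abs (pd u i x), ← mul_pow]
    exact pow_le_pow_left₀ (by positivity) (h i).le 2
  have h2 : ((n:ℝ) + 1) ^ 2 * ‖gradient u x‖ ^ 2 ≤ n * ‖gradient u x‖ ^ 2 := by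
    conv_lhs => rw [norm_gradient_sq u x, Finset.mul_sum]
    calc _ ≤ ∑ _i : Fin n, ‖gradient u x‖ ^ 2 := Finset.sum_le_sum fun i _ => h1 i
      _ = _ := by simp
  have h3 := le_of_mul_le_mul_right h2 (pow_pos hpos 2)
  nlinarith [(Nat.cast_nonneg n : (0:ℝ) ≤ n)]

/-! ### The regularized vector field -/

/-- `|∇u|² + ε`, which for `ε > 0` is a strictly positive smooth substitute for `|∇u|²`. -/
def regGrad (u : E n → ℝ) (ε : ℝ) (x : E n) : ℝ := ∑ j, pd u j x ^ 2 + ε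

lemma regGrad_eq (u : E n → ℝ) (ε : ℝ) (x : E n) : regGrad u ε x = ‖gradient u x‖ ^ 2 + ε := by
  rw [norm_gradient_sq, regGrad]

lemma regGrad_pos (u : E n → ℝ) {ε : ℝ} (hε : 0 < ε) (x : E n) : 0 < regGrad u ε x := by
  rw [regGrad_eq]; positivity

lemma contDiff_regGrad (hu : ContDiff ℝ (⊤ : ℕ∞) u) (ε : ℝ) :
    ContDiff ℝ (⊤ : ℕ∞) (regGrad u ε) :=
  (ContDiff.sum fun j _ => (contDiff_pd hu j).pow 2).add contDiff_const

lemma contDiff_quotM_regGrad {M : ℝ → ℝ} (hM : ContDiffOn ℝ 1 M (Ioi 0))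
    (hu : ContDiff ℝ (⊤ : ℕ∞) u) {ε : ℝ} (hε : 0 < ε) :
    ContDiff ℝ 1 fun x => quotM M (regGrad u ε x) :=
  (quotM_contDiffOn hM).comp_contDiff ((contDiff_regGrad hu ε).of_le (by norm_cast))
    (regGrad_pos u hε)

lemma abs_fderiv_regGrad_le (hu : ContDiff ℝ (⊤ : ℕ∞) u) (ε : ℝ) (i : Fin n) (x : E n) :
    |pd (regGrad u ε) i x| ≤ 2 * n * ‖gradient u x‖ * hessNormHS u x := by
  have h : HasFDerivAt (regGrad u ε)
      (∑ j, (2 * pd u j x ^ (2 - 1)) • fderiv ℝ (pd u j) x) x := by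
    refine HasFDerivAt.add_const ε (HasFDerivAt.fun_sum fun j _ => ?_)
    have := (((contDiff_pd hu j).differentiable (by simp)) x).hasFDerivAt.pow 2
    simpa using this
  have e : pd (regGrad u ε) i x = ∑ j, 2 * pd u j x * pd (pd u j) i x := by
    rw [pd, h.fderiv]
    simp [pd]
  rw [e]
  calc _ ≤ ∑ j, |2 * pd u j x * pd (pd u j) i x| := Finset.abs_sum_le_sum_abs _ _
    _ ≤ ∑ _j : Fin n, 2 * ‖gradient u x‖ * hessNormHS u x := by
        refine Finset.sum_le_sum fun j _ => ?_
        rw [abs_mul, abs_mul, abs_two]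
        gcongr
        · exact abs_pd_le u j x
        · exact (abs_pd_le _ i x).trans (norm_gradient_pd_le hu j x)
    _ = _ := by simp; ring

/-- The vector field `N(|∇u|² + ε) ∇u` has diagonal partial derivatives bounded
by a multiple of `N(|∇u|² + ε) |∇⁽²⁾u|`, with a factor independent of `ε`. -/
lemma abs_pd_field_le {M : ℝ → ℝ} (hM : IsNFunction M) (hC : ContDiffOn ℝ 1 M (Ioi 0))
    {c : ℝ} (hΔ : ∀ l > (0:ℝ), M (2 * l) ≤ c * M l)
    (hu : ContDiff ℝ (⊤ : ℕ∞) u) {ε : ℝ} (hε : 0 < ε) (i : Fin n) (x : E n) :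
    |pd (fun y => quotM M (regGrad u ε y) * pd u i y) i x| ≤
      (1 + 2 * n * (c + 1)) * quotM M (regGrad u ε x) * hessNormHS u x := by
  set t := regGrad u ε x with ht
  have ht0 : 0 < t := regGrad_pos u hε x
  have hN0 : 0 ≤ quotM M t := div_nonneg (hM.2.2.2.1 _ (Real.sqrt_nonneg _)) ht0.le
  have hN : HasDerivAt (quotM M) (deriv (quotM M) t) t :=
    (((quotM_contDiffOn hC).differentiableOn one_ne_zero).differentiableAt
      (Ioi_mem_nhds ht0)).hasDerivAt
  have hq := ((contDiff_regGrad hu ε).differentiable (by simp) x).hasFDerivAt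
  have hd := ((contDiff_pd hu i).differentiable (by simp) x).hasFDerivAt
  have h := (hN.comp_hasFDerivAt x hq).mul hd
  have e : pd (fun y => quotM M (regGrad u ε y) * pd u i y) i x =
      quotM M t * pd (pd u i) i x + pd u i x * (deriv (quotM M) t * pd (regGrad u ε) i x) := by
    rw [pd]
    erw [h.fderiv]
    simp [pd, t]
  rw [e]
  have hH := hessNormHS_nonneg u x
  have hg : ‖gradient u x‖ * ‖gradient u x‖ ≤ t := by rw [ht, regGrad_eq]; nlinarith
  have h1 : |pd (pd u i) i x| ≤ hessNormHS u x :=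
    (abs_pd_le _ i x).trans (norm_gradient_pd_le hu i x)
  calc _ ≤ |quotM M t * pd (pd u i) i x|
        + |pd u i x * (deriv (quotM M) t * pd (regGrad u ε) i x)| := abs_add_le _ _
    _ ≤ quotM M t * hessNormHS u x + ‖gradient u x‖ * (|deriv (quotM M) t| *
          (2 * n * ‖gradient u x‖ * hessNormHS u x)) := by
        rw [abs_mul, abs_mul, abs_mul, abs_of_nonneg hN0]
        gcongr
        · exact abs_pd_le u i x
        · exact abs_fderiv_regGrad_le hu ε i x
    _ = quotM M t * hessNormHS u x + 2 * n * hessNormHS u x *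
          (|deriv (quotM M) t| * (‖gradient u x‖ * ‖gradient u x‖)) := by ring
    _ ≤ quotM M t * hessNormHS u x + 2 * n * hessNormHS u x * ((c + 1) * quotM M t) := by
        refine add_le_add_right (mul_le_mul_of_nonneg_left ?_ (by positivity)) _
        exact (mul_le_mul_of_nonneg_left hg (abs_nonneg _)).trans
          (abs_deriv_quotM_mul_le hM hC hΔ ht0)
    _ = _ := by ring

end

/-! ### Young and Hardy inequalities, and the limit of vanishing regularization -/

/-- The Young inequality of `CondY` at `u = √t`, extended to vanishing `v` and `w`, and with the
argument of `Q` enlarged. -/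
lemma young_of_condY {M P Q : ℝ → ℝ} (hM : IsNFunction M) (hY : CondY M P Q)
    {t v w w' : ℝ} (ht : 0 < t) (hv : 0 ≤ v) (hw : 0 ≤ w) (hww : w ≤ w') :
    quotM M t * v * w ≤ M (Real.sqrt t) + P v + Q w' := by
  obtain ⟨-, -, hP, hQ, -, hQm, -, -, h⟩ := hY
  have h1 : 0 ≤ M (Real.sqrt t) + P v + Q w' :=
    add_nonneg (add_nonneg (hM.2.2.2.1 _ (Real.sqrt_nonneg _)) (hP _ hv)) (hQ _ (hw.trans hww))
  rcases hv.eq_or_lt with rfl | hv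
  · simpa using h1
  rcases hw.eq_or_lt with rfl | hw
  · simpa using h1
  have := h _ (Real.sqrt_pos.2 ht) v hv w hw
  rw [Real.sq_sqrt ht.le] at this
  have h2 := hQm hw.le (hw.le.trans hww) hww
  rw [quotM]
  linarith

lemma integrable_monotone_comp {α : Type*} [MeasurableSpace α] {ν : Measure α}
    [IsFiniteMeasure ν] {P : ℝ → ℝ} (hPm : Measurable P) (hP : ∀ x ≥ (0:ℝ), 0 ≤ P x)
    (hmono : MonotoneOn P (Ici 0)) {f : α → ℝ} (hf : AEMeasurable f ν) {b : ℝ}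
    (hb : ∀ᵐ x ∂ν, 0 ≤ f x ∧ f x ≤ b) : Integrable (fun x => P (f x)) ν := by
  refine Integrable.of_bound (hPm.comp_aemeasurable hf).aestronglyMeasurable (P b) ?_
  filter_upwards [hb] with x hx
  rw [Real.norm_eq_abs, abs_of_nonneg (hP _ hx.1)]
  exact hmono hx.1 (hx.1.trans hx.2) hx.2

/-- The partial derivatives are admissible in the Hardy inequality, which therefore controls
`∫ P(|∇φ| |∂ᵢu|)` by the Hessian. -/
lemma hardy_pd {n : ℕ} {Ω : Set (E n)} {P : ℝ → ℝ} {μ : Measure (E n)}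
    {φ' : E n → E n} {K A : ℝ} (hK : 0 < K) (hA : 0 < A)
    (hP : ∀ x ≥ (0:ℝ), 0 ≤ P x) (hmono : MonotoneOn P (Ici 0))
    (hH : ∀ u : E n → ℝ, TestFun Ω u →
      ∫ x, P (‖φ' x‖ * |u x|) ∂μ ≤ K * ∫ x, P (A * ‖gradient u x‖) ∂μ)
    {θ : ℝ} (hθ : 0 < θ) {u : E n → ℝ} (hu : TestFun Ω u)
    (hint : Integrable (fun x => P (θ * hessNormHS u x)) μ) (i : Fin n) :
    ∫ x, P (‖φ' x‖ * |θ / A * pd u i x|) ∂μ ≤ K * ∫ x, P (θ * hessNormHS u x) ∂μ := by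
  obtain ⟨hu1, hu2, hu3⟩ := hu
  have hv : TestFun Ω fun x => θ / A * pd u i x := by
    refine ⟨contDiff_const.mul (contDiff_pd hu1 i), ?_, ?_⟩
    · exact HasCompactSupport.mul_left (hu2.fderiv_apply ℝ _)
    · exact tsupport_mul_subset_right.trans ((tsupport_pd_subset i).trans hu3)
  refine (hH _ hv).trans (mul_le_mul_of_nonneg_left ?_ hK.le)
  have hle : ∀ x, A * ‖gradient (fun x => θ / A * pd u i x) x‖ ≤ θ * hessNormHS u x := by
    intro x
    have h1 : ‖gradient (fun x => θ / A * pd u i x) x‖ = θ / A * ‖gradient (pd u i) x‖ := by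
      simp only [gradient, LinearIsometryEquiv.norm_map]
      rw [fderiv_const_mul ((contDiff_pd hu1 i).differentiable (by simp) x), norm_smul,
        Real.norm_of_nonneg (by positivity)]
    rw [h1, ← mul_assoc, mul_div_cancel₀ _ hA.ne']
    exact mul_le_mul_of_nonneg_left (norm_gradient_pd_le hu1 i x) hθ.le
  have h0 : ∀ x, 0 ≤ A * ‖gradient (fun x => θ / A * pd u i x) x‖ := fun x => by positivity
  exact integral_mono_of_nonneg (ae_of_all _ fun x => hP _ (h0 x)) hint
    (ae_of_all _ fun x => hmono (h0 x) ((h0 x).trans (hle x)) (hle x))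

/-- Letting `ε → 0`: for a bounded continuous `g ≥ 0`, playing the role of `|∇u|`, on a finite
measure space. -/
lemma limit_step {α : Type*} [TopologicalSpace α] [MeasurableSpace α] [OpensMeasurableSpace α]
    {ν : Measure α} [IsFiniteMeasure ν] {M : ℝ → ℝ} (hM : IsNFunction M) {g : α → ℝ}
    (hg : Continuous g) {b : ℝ} (hb : ∀ x, 0 ≤ g x ∧ g x ≤ b) {R : ℝ}
    (h : ∀ ε > (0:ℝ), ∫ x, quotM M (g x ^ 2 + ε) * g x ^ 2 ∂ν ≤
      1 / 2 * ∫ x, M (Real.sqrt (g x ^ 2 + ε)) ∂ν + R) :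
    ∫ x, M (g x) ∂ν ≤ 1 / 2 * ∫ x, M (g x) ∂ν + R := by
  have hmono := hM.monotoneOn
  obtain ⟨hcont, -, hM0, hpos, -, -⟩ := hM
  set e : ℕ → ℝ := fun k => 1 / ((k:ℝ) + 1) with he
  have he0 : ∀ k, 0 < e k := fun k => by positivity
  have he1 : ∀ k, e k ≤ 1 := fun k => by
    rw [he]; exact div_le_one_of_le₀ (by simp) (by positivity)
  have het : Tendsto e atTop (nhds 0) := tendsto_one_div_add_atTop_nhds_zero_nat
  have hq : ∀ k x, 0 < g x ^ 2 + e k := fun k x => by have := he0 k; positivity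
  have hMc : ∀ k, Continuous fun x => M (Real.sqrt (g x ^ 2 + e k)) := fun k =>
    hcont.comp_continuous (by fun_prop) fun x => Real.sqrt_nonneg _
  have hMb : ∀ k x, M (Real.sqrt (g x ^ 2 + e k)) ≤ M (Real.sqrt (b ^ 2 + 1)) := fun k x =>
    hmono (Real.sqrt_nonneg _) (Real.sqrt_nonneg _)
      (Real.sqrt_le_sqrt (add_le_add (pow_le_pow_left₀ (hb x).1 (hb x).2 2) (he1 k)))
  have hMt : ∀ x, Tendsto (fun k => M (Real.sqrt (g x ^ 2 + e k))) atTop (nhds (M (g x))) := by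
    intro x
    have h1 : Tendsto (fun k => Real.sqrt (g x ^ 2 + e k)) atTop (nhds (g x)) := by
      have : Tendsto (fun k => Real.sqrt (g x ^ 2 + e k)) atTop (nhds (Real.sqrt (g x ^ 2 + 0))) :=
        (Real.continuous_sqrt.tendsto _).comp (tendsto_const_nhds.add het)
      rwa [add_zero, Real.sqrt_sq (hb x).1] at this
    exact ((hcont _ (hb x).1).tendsto).comp
      (tendsto_nhdsWithin_iff.2 ⟨h1, Eventually.of_forall fun k => Real.sqrt_nonneg _⟩)
  have t1 : Tendsto (fun k => ∫ x, M (Real.sqrt (g x ^ 2 + e k)) ∂ν) atTop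
      (nhds (∫ x, M (g x) ∂ν)) := by
    refine tendsto_integral_of_dominated_convergence (fun _ => M (Real.sqrt (b ^ 2 + 1)))
      (fun k => (hMc k).aestronglyMeasurable) (integrable_const _)
      (fun k => ae_of_all _ fun x => ?_) (ae_of_all _ hMt)
    rw [Real.norm_of_nonneg (hpos _ (Real.sqrt_nonneg _))]
    exact hMb k x
  have t2 : Tendsto (fun k => ∫ x, quotM M (g x ^ 2 + e k) * g x ^ 2 ∂ν) atTop
      (nhds (∫ x, M (g x) ∂ν)) := by
    refine tendsto_integral_of_dominated_convergence (fun _ => M (Real.sqrt (b ^ 2 + 1)))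
      (fun k => ?_) (integrable_const _) (fun k => ae_of_all _ fun x => ?_)
      (ae_of_all _ fun x => ?_)
    · refine Continuous.aestronglyMeasurable ?_
      unfold quotM
      exact ((hMc k).div (by fun_prop) fun x => (hq k x).ne').mul (hg.pow 2)
    · have h0 := hpos _ (Real.sqrt_nonneg (g x ^ 2 + e k))
      rw [quotM, div_mul_eq_mul_div, Real.norm_of_nonneg (div_nonneg (by positivity) (hq k x).le),
        div_le_iff₀ (hq k x)]
      refine mul_le_mul (hMb k x) ?_ (sq_nonneg _) (h0.trans (hMb k x))
      linarith [he0 k]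
    · rcases (hb x).1.eq_or_lt with h0 | h0
      · rw [← h0, hM0]
        simp
      · have h1 : Tendsto (fun k => g x ^ 2 + e k) atTop (nhds (g x ^ 2 + 0)) :=
          tendsto_const_nhds.add het
        rw [add_zero] at h1
        have h2 := ((hMt x).div h1 (pow_pos h0 2).ne').mul_const (g x ^ 2)
        rwa [div_mul_cancel₀ _ (pow_pos h0 2).ne'] at h2
  exact le_of_tendsto_of_tendsto' t2 ((t1.const_mul _).add_const R) fun k => h _ (he0 k)

/-! ### The interpolation inequality -/

/-- Cauchy–Schwarz and the bound on the divergence of the field: apart from the terms which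
integrate to zero against `e^{-φ} dx` when `p = ∇φ`, the quantity `N(|∇u|² + ε) |∇u|²` is controlled by
the Hessian of `u` and by `p`. -/
lemma pointwise_bound {n : ℕ} {M : ℝ → ℝ} (hM : IsNFunction M)
    (hC : ContDiffOn ℝ 1 M (Ioi 0)) {c : ℝ}
    (hΔ : ∀ l > (0:ℝ), M (2 * l) ≤ c * M l) {u : E n → ℝ} (hu : ContDiff ℝ (⊤ : ℕ∞) u)
    {ε : ℝ} (hε : 0 < ε) (x p : E n) :
    quotM M (regGrad u ε x) * ‖gradient u x‖ ^ 2 ≤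
      ∑ i, (pd (fun y => u y * (quotM M (regGrad u ε y) * pd u i y)) i x
        - u x * (quotM M (regGrad u ε x) * pd u i x)
          * inner ℝ p (EuclideanSpace.single i (1:ℝ)))
      + quotM M (regGrad u ε x) * hessNormHS u x * ((n * (1 + 2 * n * (c + 1))) * |u x|)
      + quotM M (regGrad u ε x) * (‖p‖ * ‖gradient u x‖) * |u x| := by
  set N := quotM M (regGrad u ε x) with hN
  have hN0 : 0 ≤ N :=
    div_nonneg (hM.2.2.2.1 _ (Real.sqrt_nonneg _)) (regGrad_pos u hε x).le
  set h : Fin n → E n → ℝ := fun i y => quotM M (regGrad u ε y) * pd u i y with hh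
  have hprod : ∀ i, pd (fun y => u y * h i y) i x = u x * pd (h i) i x + N * pd u i x ^ 2 := by
    intro i
    have d1 := (hu.differentiable (by simp) x).hasFDerivAt
    have d2 : DifferentiableAt ℝ (h i) x :=
      ((contDiff_quotM_regGrad hC hu hε).mul
        ((contDiff_pd hu i).of_le (by norm_cast))).differentiable one_ne_zero x
    have := d1.mul d2.hasFDerivAt
    rw [pd]
    erw [this.fderiv]
    simp only [pd, add_apply, smul_apply, smul_eq_mul,
      hh, hN]
    ring
  have hinner : ∑ i, pd u i x * inner ℝ p (EuclideanSpace.single i (1:ℝ))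
      = inner ℝ p (gradient u x) := by
    rw [PiLp.inner_apply]
    refine Finset.sum_congr rfl fun i _ => ?_
    rw [gradient_apply, EuclideanSpace.inner_single_right]
    simp
  have hsum : ∑ i, (pd (fun y => u y * h i y) i x
        - u x * (N * pd u i x) * inner ℝ p (EuclideanSpace.single i (1:ℝ)))
      = N * ‖gradient u x‖ ^ 2 + u x * ∑ i, pd (h i) i x
        - u x * N * inner ℝ p (gradient u x) := by
    rw [← hinner, norm_gradient_sq, Finset.mul_sum, Finset.mul_sum, Finset.mul_sum,
      ← Finset.sum_add_distrib, ← Finset.sum_sub_distrib]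
    refine Finset.sum_congr rfl fun i _ => ?_
    rw [hprod]; ring
  change _ ≤ ∑ i, (pd (fun y => u y * h i y) i x
        - u x * (N * pd u i x) * inner ℝ p (EuclideanSpace.single i (1:ℝ))) + _ + _
  rw [hsum]
  have b1 : |∑ i, pd (h i) i x| ≤ n * ((1 + 2 * n * (c + 1)) * N * hessNormHS u x) := by
    calc _ ≤ ∑ i, |pd (h i) i x| := Finset.abs_sum_le_sum_abs _ _
      _ ≤ ∑ _i : Fin n, (1 + 2 * n * (c + 1)) * N * hessNormHS u x :=
          Finset.sum_le_sum fun i _ => abs_pd_field_le hM hC hΔ hu hε i x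
      _ = _ := by simp
  have b2 : |u x * ∑ i, pd (h i) i x| ≤
      |u x| * (n * ((1 + 2 * n * (c + 1)) * N * hessNormHS u x)) := by
    rw [abs_mul]; exact mul_le_mul_of_nonneg_left b1 (abs_nonneg _)
  have b3 : |u x * N * inner ℝ p (gradient u x)| ≤ |u x| * N * (‖p‖ * ‖gradient u x‖) := by
    rw [abs_mul, abs_mul, abs_of_nonneg hN0]
    exact mul_le_mul_of_nonneg_left (abs_real_inner_le_norm _ _) (by positivity)
  have := neg_abs_le (u x * ∑ i, pd (h i) i x)
  have := le_abs_self (u x * N * inner ℝ p (gradient u x))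
  linarith

/-- The interpolation inequality at level `ε`, over the support `S` of `u`, on which all the
functions involved are integrable. -/
lemma regularized_inequality {n : ℕ} {Ω : Set (E n)} (hΩ : IsOpen Ω) {M P Q : ℝ → ℝ}
    (hM : IsNFunction M) (hC : ContDiffOn ℝ 1 M (Ioi 0)) {c : ℝ} (hc : 0 < c)
    (hΔ : ∀ l > (0:ℝ), M (2 * l) ≤ c * M l) (hY : CondY M P Q)
    {φ : E n → ℝ} (hφ : LocLipschitzOn Ω φ) {φ' : E n → E n}
    (hφ' : ∀ᵐ x ∂(volume.restrict Ω), HasGradientAt φ (φ' x) x)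
    {K A : ℝ} (hK : 0 < K) (hA : 0 < A)
    (hH : ∀ u : E n → ℝ, TestFun Ω u →
      ∫ x, P (‖φ' x‖ * |u x|) ∂(measOf Ω φ) ≤
        K * ∫ x, P (A * ‖gradient u x‖) ∂(measOf Ω φ))
    {θ : ℝ} (hθ : 0 < θ) {u : E n → ℝ} (hu : TestFun Ω u) {ε : ℝ} (hε : 0 < ε) :
    ∫ x, quotM M (regGrad u ε x) * ‖gradient u x‖ ^ 2 ∂((measOf Ω φ).restrict (tsupport u)) ≤
      1 / 2 * ∫ x, M (Real.sqrt (regGrad u ε x)) ∂((measOf Ω φ).restrict (tsupport u))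
      + ((1 / 4 + n * K / 4) * ∫ x, P (θ * hessNormHS u x) ∂(measOf Ω φ)
        + 1 / 2 * ∫ x, Q ((4 * (n * (1 + 2 * n * (c + 1))) + 4 * A * (n + 1)) / θ * |u x|)
            ∂(measOf Ω φ)) := by
  have hu' := hu
  obtain ⟨hu1, hu2, hu3⟩ := hu'
  have hY' := hY
  obtain ⟨hPm, hQm, hP, hQ, hPmono, hQmono, hP0, hQ0, -⟩ := hY'
  set μ := measOf Ω φ with hμ
  set S := tsupport u with hS
  set ν := μ.restrict S with hν
  have hScomp : IsCompact S := hu2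
  have : IsFiniteMeasure ν := isFiniteMeasure_restrict hφ hScomp hu3
  set C0 : ℝ := n * (1 + 2 * n * (c + 1)) with hC0
  have hC0' : 0 ≤ C0 := by positivity
  set B : ℝ := 4 * C0 + 4 * A * (n + 1) with hB
  have hB0 : 0 < B := by positivity
  have hνS : ∀ᵐ x ∂ν, x ∈ S := ae_restrict_mem hScomp.measurableSet
  have hgrad : ∀ᵐ x ∂ν, HasGradientAt φ (φ' x) x :=
    ae_restrict_of_ae ((withDensity_absolutelyContinuous _ _).ae_le hφ')
  obtain ⟨G, hG0, hG⟩ := exists_gradient_bound hΩ hφ hScomp hu3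
  have hφb : ∀ᵐ x ∂ν, ‖φ' x‖ ≤ G := by
    filter_upwards [hνS, hgrad] with x hx hg using hG x hx _ hg
  have hφm : AEMeasurable φ' ν := by
    have hm : Measurable (gradient φ) :=
      ((InnerProductSpace.toDual ℝ (E n)).symm.continuous.measurable).comp
        (measurable_fderiv ℝ φ)
    refine ⟨gradient φ, hm, ?_⟩
    filter_upwards [hgrad] with x hx using hx.gradient.symm
  have hci : ∀ f : E n → ℝ, Continuous f → Integrable f ν := fun f hf => by
    obtain ⟨b, hb⟩ := hScomp.exists_bound_of_continuousOn hf.continuousOn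
    refine Integrable.of_bound hf.aestronglyMeasurable b ?_
    filter_upwards [hνS] with x hx using hb x hx
  -- the weighted divergence of `u N ∇u`, term by term, integrates to zero
  set k : Fin n → E n → ℝ := fun i y => u y * (quotM M (regGrad u ε y) * pd u i y) with hk
  have hk1 : ∀ i, ContDiff ℝ 1 (k i) := fun i =>
    (hu1.of_le (by norm_cast)).mul ((contDiff_quotM_regGrad hC hu1 hε).mul
        ((contDiff_pd hu1 i).of_le (by norm_cast)))
  have hksub : ∀ i, tsupport (k i) ⊆ S := fun i => tsupport_mul_subset_left
  set z : Fin n → E n → ℝ := fun i x => pd (k i) i x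
    - k i x * inner ℝ (φ' x) (EuclideanSpace.single i (1:ℝ)) with hz
  have hz0 : ∀ i, ∫ x, z i x ∂ν = 0 := fun i => by
    rw [hν, setIntegral_eq_integral_of_forall_compl_eq_zero]
    · exact integral_fderiv_sub_eq_zero hΩ hφ hφ' (hk1 i) hu2.mul_right ((hksub i).trans hu3) _
    · intro x hx
      have h1 : k i x = 0 := image_eq_zero_of_notMem_tsupport fun h => hx (hksub i h)
      have h2 : pd (k i) i x = 0 :=
        image_eq_zero_of_notMem_tsupport fun h => hx (hksub i (tsupport_pd_subset i h))
      simp [hz, h1, h2]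
  have hzi : ∀ i, Integrable (z i) ν := fun i => by
    have hp : Continuous (pd (k i) i) :=
      ((hk1 i).continuous_fderiv one_ne_zero).clm_apply continuous_const
    refine (hci _ hp).sub ((hci _ (hk1 i).continuous).mul_bdd (c := G) ?_ ?_)
    · exact (hφm.inner_const).aestronglyMeasurable
    · filter_upwards [hφb] with x hx
      refine (norm_inner_le_norm _ _).trans ?_
      simpa using hx
  -- `P`, `Q` are bounded on bounded sets and `ν` is finite, so all the modulars are integrable
  have hHc := continuous_hessNormHS hu1
  have hPH : Integrable (fun x => P (θ * hessNormHS u x)) ν := by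
    obtain ⟨b, hb⟩ := hScomp.exists_bound_of_continuousOn
      (f := fun x => θ * hessNormHS u x) (by fun_prop)
    refine integrable_monotone_comp hPm hP hPmono (by fun_prop) (b := b) ?_
    filter_upwards [hνS] with x hx
    exact ⟨mul_nonneg hθ.le (hessNormHS_nonneg u x), (le_abs_self _).trans (hb x hx)⟩
  have hPHμ : Integrable (fun x => P (θ * hessNormHS u x)) μ := by
    refine (integrableOn_iff_integrable_of_support_subset (s := S) ?_).1 hPH
    intro x hx
    by_contra h
    exact hx (by simp [hessNormHS_eq_zero hu1 h, hP0])
  have hQu : Integrable (fun x => Q (B / θ * |u x|)) ν := by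
    have hcu := hu1.continuous
    obtain ⟨b, hb⟩ := hScomp.exists_bound_of_continuousOn
      (f := fun x => B / θ * |u x|) (by fun_prop)
    refine integrable_monotone_comp hQm hQ hQmono (by fun_prop) (b := b) ?_
    filter_upwards [hνS] with x hx
    exact ⟨by positivity, (le_abs_self _).trans (hb x hx)⟩
  have hPi : ∀ i, Integrable (fun x => P (‖φ' x‖ * |θ / A * pd u i x|)) ν := fun i => by
    have hcu := (contDiff_pd hu1 i).continuous
    obtain ⟨b, hb⟩ := hScomp.exists_bound_of_continuousOn
      (f := fun x => θ / A * pd u i x) (by fun_prop)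
    refine integrable_monotone_comp hPm hP hPmono (hφm.norm.mul (by fun_prop)) (b := G * b) ?_
    filter_upwards [hνS, hφb] with x hx hx'
    exact ⟨by positivity, mul_le_mul hx' (hb x hx) (abs_nonneg _) hG0⟩
  have hMi : Integrable (fun x => M (Real.sqrt (regGrad u ε x))) ν := by
    have hq := (contDiff_regGrad hu1 ε).continuous
    exact hci _ (hM.1.comp_continuous (by fun_prop) fun x => Real.sqrt_nonneg _)
  have hLi : Integrable (fun x => quotM M (regGrad u ε x) * ‖gradient u x‖ ^ 2) ν :=
    hci _ ((contDiff_quotM_regGrad hC hu1 hε).continuous.mul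
      ((continuous_norm_gradient hu1).pow 2))
  -- all the modulars of `P` and `Q` vanish off `S`, because `P 0 = Q 0 = 0`
  have eP : ∫ x, P (θ * hessNormHS u x) ∂ν = ∫ x, P (θ * hessNormHS u x) ∂μ :=
    setIntegral_eq_integral_of_forall_compl_eq_zero fun x hx => by
      simp [hessNormHS_eq_zero hu1 hx, hP0]
  have eQ : ∫ x, Q (B / θ * |u x|) ∂ν = ∫ x, Q (B / θ * |u x|) ∂μ :=
    setIntegral_eq_integral_of_forall_compl_eq_zero fun x hx => by
      simp [image_eq_zero_of_notMem_tsupport hx, hQ0]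
  have hIi : ∀ i, ∫ x, P (‖φ' x‖ * |θ / A * pd u i x|) ∂ν ≤
      K * ∫ x, P (θ * hessNormHS u x) ∂μ := fun i => by
    have : ∫ x, P (‖φ' x‖ * |θ / A * pd u i x|) ∂ν = ∫ x, P (‖φ' x‖ * |θ / A * pd u i x|) ∂μ :=
      setIntegral_eq_integral_of_forall_compl_eq_zero fun x hx => by
        have : pd u i x = 0 :=
          image_eq_zero_of_notMem_tsupport fun h => hx (tsupport_pd_subset i h)
        simp [this, hP0]
    rw [this]
    exact hardy_pd hK hA hP hPmono hH hθ hu hPHμ i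
  -- each Young inequality is used with the factor `1/4`, which enlarges `w` by the factor `4`
  have key : ∀ x, quotM M (regGrad u ε x) * ‖gradient u x‖ ^ 2 ≤
      ∑ i, z i x + (1 / 2 * M (Real.sqrt (regGrad u ε x)) + (1 / 4 * P (θ * hessNormHS u x)
        + (1 / 4 * ∑ i, P (‖φ' x‖ * |θ / A * pd u i x|) + 1 / 2 * Q (B / θ * |u x|)))) := by
    intro x
    have h0 := pointwise_bound hM hC hΔ hu1 hε x (φ' x)
    have hH0 := hessNormHS_nonneg u x
    have hq0 := regGrad_pos u hε x
    have y1 := young_of_condY hM hY hq0 (v := θ * hessNormHS u x) (w := 4 * C0 / θ * |u x|)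
      (w' := B / θ * |u x|) (by positivity) (by positivity) (by
        rw [hB]; gcongr; linarith [show 0 ≤ 4 * A * ((n:ℝ) + 1) by positivity])
    have y2 := young_of_condY hM hY hq0 (v := θ / (A * (n + 1)) * (‖φ' x‖ * ‖gradient u x‖))
      (w := 4 * A * (n + 1) / θ * |u x|)
      (w' := B / θ * |u x|) (by positivity) (by positivity) (by
        rw [hB]; gcongr; linarith)
    have hsum : P (θ / (A * (n + 1)) * (‖φ' x‖ * ‖gradient u x‖)) ≤
        ∑ i, P (‖φ' x‖ * |θ / A * pd u i x|) := by
      have hnn : ∀ i ∈ Finset.univ, 0 ≤ P (‖φ' x‖ * |θ / A * pd u i x|) :=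
        fun i _ => hP _ (by positivity)
      rcases exists_norm_gradient_le u x with h | ⟨i, hi⟩
      · rw [h, norm_zero, mul_zero, mul_zero, hP0]
        exact Finset.sum_nonneg hnn
      · refine le_trans ?_ (Finset.single_le_sum hnn (Finset.mem_univ i))
        have hle : θ / (A * (n + 1)) * (‖φ' x‖ * ‖gradient u x‖) ≤
            ‖φ' x‖ * |θ / A * pd u i x| := by
          calc _ ≤ θ / (A * (n + 1)) * (‖φ' x‖ * ((n + 1) * |pd u i x|)) := by gcongr
            _ = _ := by
              rw [abs_mul, abs_of_pos (div_pos hθ hA)]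
              field_simp
        exact hPmono (mem_Ici.2 (by positivity)) (mem_Ici.2 (by positivity)) hle
    have e1 : quotM M (regGrad u ε x) * (θ * hessNormHS u x) * (4 * C0 / θ * |u x|) =
        4 * (quotM M (regGrad u ε x) * hessNormHS u x * (C0 * |u x|)) := by
      field_simp
    have e2 : quotM M (regGrad u ε x) * (θ / (A * (n + 1)) * (‖φ' x‖ * ‖gradient u x‖))
          * (4 * A * (n + 1) / θ * |u x|) =
        4 * (quotM M (regGrad u ε x) * (‖φ' x‖ * ‖gradient u x‖) * |u x|) := by
      field_simp
    rw [e1] at y1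
    rw [e2] at y2
    change _ ≤ ∑ i, z i x + _ + _ at h0
    linarith
  have hzS : Integrable (fun x => ∑ i, z i x) ν := integrable_finsetSum _ fun i _ => hzi i
  have hPS : Integrable (fun x => ∑ i, P (‖φ' x‖ * |θ / A * pd u i x|)) ν :=
    integrable_finsetSum _ fun i _ => hPi i
  have i1 := (hPS.const_mul (1 / 4)).add (hQu.const_mul (1 / 2))
  have i2 := (hPH.const_mul (1 / 4)).add i1
  have i3 := (hMi.const_mul (1 / 2)).add i2
  have hfin := integral_mono hLi (hzS.add i3) key
  simp only [Pi.add_apply] at hfin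
  erw [integral_add hzS i3, integral_add (hMi.const_mul (1 / 2)) i2,
    integral_add (hPH.const_mul (1 / 4)) i1, integral_add (hPS.const_mul (1 / 4))
    (hQu.const_mul (1 / 2))] at hfin
  rw [integral_const_mul, integral_const_mul, integral_const_mul, integral_const_mul,
    integral_finsetSum _ (fun i _ => hzi i), integral_finsetSum _ (fun i _ => hPi i), eP, eQ,
    Finset.sum_eq_zero fun i _ => hz0 i] at hfin
  have hs : ∑ i, ∫ x, P (‖φ' x‖ * |θ / A * pd u i x|) ∂ν ≤
      n * (K * ∫ x, P (θ * hessNormHS u x) ∂μ) := by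
    refine (Finset.sum_le_sum fun i _ => hIi i).trans ?_
    simp
  linarith

/-- Theorem 3.1(1): the Hardy inequality (H) implies the modular
Gagliardo–Nirenberg inequality. -/
theorem statement0 {n : ℕ} (Ω : Set (E n)) (hΩ : IsOpen Ω)
    (M P Q : ℝ → ℝ) (hM : CondM M) (hY : CondY M P Q)
    (φ : E n → ℝ) (hφ : LocLipschitzOn Ω φ) (φ' : E n → E n)
    (hφ' : ∀ᵐ x ∂(volume.restrict Ω), HasGradientAt φ (φ' x) x)
    (K A : ℝ) (hK : 0 < K) (hA : 0 < A)
    (hH : ∀ u : E n → ℝ, TestFun Ω u →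
      ∫ x, P (‖φ' x‖ * |u x|) ∂(measOf Ω φ) ≤
        K * ∫ x, P (A * ‖gradient u x‖) ∂(measOf Ω φ)) :
    ∃ L > (0:ℝ), ∃ B > (0:ℝ), ∀ θ > (0:ℝ), ∀ u : E n → ℝ, TestFun Ω u →
      ∫ x, M ‖gradient u x‖ ∂(measOf Ω φ) ≤
        L * ∫ x, P (θ * hessNormHS u x) ∂(measOf Ω φ)
          + ∫ x, Q (B / θ * |u x|) ∂(measOf Ω φ) := by
  obtain ⟨hN, hC, ⟨c, hc, hΔ⟩, -⟩ := hM
  have hP := hY.2.2.1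
  have hQ := hY.2.2.2.1
  refine ⟨n * K + 1, by positivity, 4 * (n * (1 + 2 * n * (c + 1))) + 4 * A * (n + 1),
    by positivity, fun θ hθ u hu => ?_⟩
  have hfin := isFiniteMeasure_restrict hφ hu.2.1 hu.2.2
  have hg := continuous_norm_gradient hu.1
  obtain ⟨b, hb⟩ := hg.bounded_above_of_compact_support
    (HasCompactSupport.of_support_subset_isCompact hu.2.1 fun x hx => by
      by_contra h
      exact hx (by simp [gradient_eq_zero h]))
  have h := limit_step (ν := (measOf Ω φ).restrict (tsupport u)) hN hg (b := b)
    (fun x => ⟨norm_nonneg _, by simpa using hb x⟩) fun ε hε => by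
      simpa only [regGrad_eq] using
        regularized_inequality hΩ hN hC hc hΔ hY hφ hφ' hK hA hH hθ hu hε
  rw [setIntegral_eq_integral_of_forall_compl_eq_zero fun x hx => by
    simp [gradient_eq_zero hx, hN.2.2.1]] at h
  have h1 : 0 ≤ ∫ x, P (θ * hessNormHS u x) ∂(measOf Ω φ) :=
    integral_nonneg fun x => hP _ (mul_nonneg hθ.le (hessNormHS_nonneg u x))
  have h2 : 0 ≤ n * K * ∫ x, P (θ * hessNormHS u x) ∂(measOf Ω φ) := by positivity
  linarith
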